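/- There is an absolute constant K such that the following holds in the SimLine setting. Assume u > log₂ q + log₂ v, let h := s/(u − log₂ q − log₂ v) + 1 (a real number), and assume h ≤ v. For every deterministic MPC algorithm with m machines, local memory s bits, and at most q oracle queries per machine per round, and every integer k with 0 ≤ k < w/h − 1, the probability over uniformly random (RO, X) that Q^{(≤k)} ∩ C^{(k+1)} ≠ ∅ is at most K·(k+1)·(m·2^(−(u − log₂ q − log₂ v)) + w·m·q·2^(−u) + w²·2^(−u)). (The paper's inductive Claim in the proof of Lemma A.1 states the bound (k+1)·(m·2^(−(u − log₂ q − log₂ v)) + w·m·q·2^(−u)).) -/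

import Mathlib

/-- Probability of `P` under the uniform distribution on a finite type `Ω`. -/
noncomputable def unifProb {Ω : Type} [Fintype Ω] (P : Ω → Prop) : ℝ :=
  (Set.ncard {ω : Ω | P ω} : ℝ) / (Fintype.card Ω : ℝ)
/-- Bit strings of length `k`. -/
abbrev Bits (k : ℕ) := Fin k → Bool

/-- The `j`-th bit (`0`-based) of a bit string, `false` out of range. -/
def bitAt {k : ℕ} (y : Bits k) (j : ℕ) : Bool := if h : j < k then y ⟨j, h⟩ else false

/-- The `i`-th block (`0`-based) of the input `X = (x_1, …, x_v)`. -/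
def getX {u v : ℕ} (X : Fin v → Bits u) (i : ℕ) : Bits u :=
  if h : i < v then X ⟨i, h⟩ else fun _ => false
/-- The SimLine query string built from the step counter `k` (`0`-based, so paper index
`k+1`) and the current chain value `r`: the concatenation of `x_{(k mod v)+1}` (1-based),
`r`, and `n − 2u` zeros. -/
def simStr (n u v : ℕ) (X : Fin v → Bits u) (k : ℕ) (r : Bits u) : Bits n := fun j =>
  if (j : ℕ) < u then bitAt (getX X (k % v)) (j : ℕ)
  else if (j : ℕ) < 2 * u then bitAt r ((j : ℕ) - u)
  else false

/-- `simR n u v RO X k` is the paper's `r_{k+1}`:  `r_1 = 0^u` and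
`r_{i+1} = ` the first `u` bits of `RO(s_i)`. -/
def simR (n u v : ℕ) (RO : Bits n → Bits n) (X : Fin v → Bits u) : ℕ → Bits u
  | 0 => fun _ => false
  | k + 1 => fun j => bitAt (RO (simStr n u v X k (simR n u v RO X k))) (j : ℕ)

/-- `simS n u v RO X k` is the paper's `s_{k+1}`. -/
def simS (n u v : ℕ) (RO : Bits n → Bits n) (X : Fin v → Bits u) (k : ℕ) : Bits n :=
  simStr n u v X k (simR n u v RO X k)
/-- Answers to the first `t` queries of a deterministic adaptive oracle algorithm whose
next-query function is `f`. -/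
def advAns (n : ℕ) (RO : Bits n → Bits n) (f : List (Bits n) → Bits n) : ℕ → List (Bits n)
  | 0 => []
  | t + 1 => advAns n RO f t ++ [RO (f (advAns n RO f t))]

/-- The `(t+1)`-st query (so the paper's `q_{t+1}`) of the adaptive algorithm `f`. -/
def advQ (n : ℕ) (RO : Bits n → Bits n) (f : List (Bits n) → Bits n) (t : ℕ) : Bits n :=
  f (advAns n RO f t)
/-- A deterministic MPC algorithm with `m` machines, local memory `s` bits, at most `q`
adaptive oracle queries (to an oracle on `n`-bit strings) per machine per round, on
inputs from `I`.  `init` splits the input into the machines' initial states, `qf k i` is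
machine `i`'s next-query function in round `k` (from its state and the answers received
so far in the round), and `cf k i` produces the messages machine `i` sends to each
machine at the end of round `k`; each machine receives at most `s` bits per round. -/
structure MPC (n s q m : ℕ) (I : Type) where
  init : I → Fin m → Bits s
  qf : ℕ → Fin m → Bits s → List (Bits n) → Bits n
  cf : ℕ → Fin m → Bits s → List (Bits n) → Fin m → List Bool
  comm_le : ∀ (k : ℕ) (st : Fin m → Bits s) (ans : Fin m → List (Bits n)) (j : Fin m),
    (∑ i : Fin m, (cf k i (st i) (ans i) j).length) ≤ s

/-- Pad/truncate a list of booleans to an `s`-bit state. -/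
def listToBits (s : ℕ) (L : List Bool) : Bits s := fun b => L.getD (b : ℕ) false

/-- `mstate A RO X k i` : the state of machine `i` at the beginning of round `k` when the
MPC algorithm `A` is run with oracle `RO` on input `X`. -/
def mstate {n s q m : ℕ} {I : Type} (A : MPC n s q m I) (RO : Bits n → Bits n) (X : I) :
    ℕ → Fin m → Bits s
  | 0 => A.init X
  | k + 1 => fun j =>
      listToBits s ((List.ofFn (fun i : Fin m =>
        A.cf k i (mstate A RO X k i)
          (advAns n RO (A.qf k i (mstate A RO X k i)) q) j)).flatten)

/-- The `(t+1)`-st oracle query of machine `i` in round `k` of the run of `A` with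
oracle `RO` on input `X`. -/
def mquery {n s q m : ℕ} {I : Type} (A : MPC n s q m I) (RO : Bits n → Bits n) (X : I)
    (k : ℕ) (i : Fin m) (t : ℕ) : Bits n :=
  advQ n RO (A.qf k i (mstate A RO X k i)) t

/-!
Node `s_{j+1}` of the chain contains `r_{j+1}`, the first `u` bits of the oracle's answer on `s_j`.
So, as long as the chain does not run into itself, a query can equal `s_{j+1}` before `s_j` has been
queried only by guessing `u` uniform bits; and the chain runs into itself only if the answer on a
new node hits one of at most `w` earlier values.

Excluding these two events, suppose that round `k` is the first in which a query reaches a node of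
`C^{(k+1)}`. The querying machine has then walked through at least `⌈h⌉` consecutive nodes within
the round. Their blocks, which are distinct blocks of the input because `⌈h⌉ ≤ v`, are all among the
`q` queries determined by one of `2 ^ s` states. For a given oracle this has probability at most
`2 ^ s * (q / 2 ^ u) ^ ⌈h⌉` over the input.
-/

section UniformProbability

variable {Ω Ω' α β ι κ : Type} [Fintype Ω] [Fintype Ω'] [Fintype α] [Fintype β]

theorem unifProb_le_of_injOn {P : Ω → Prop} {Q : Ω' → Prop}
    (hcard : Fintype.card Ω = Fintype.card Ω') (φ : Ω → Ω')
    (hmaps : ∀ ω, P ω → Q (φ ω)) (hinj : Set.InjOn φ {ω | P ω}) :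
    unifProb P ≤ unifProb Q := by
  unfold unifProb
  rw [hcard]
  gcongr
  exact Set.ncard_le_ncard_of_injOn φ hmaps hinj

theorem unifProb_mono {P Q : Ω → Prop} (h : ∀ ω, P ω → Q ω) : unifProb P ≤ unifProb Q :=
  unifProb_le_of_injOn rfl id h (Set.injOn_id _)

theorem unifProb_or_le (P Q : Ω → Prop) :
    unifProb (fun ω => P ω ∨ Q ω) ≤ unifProb P + unifProb Q := by
  unfold unifProb
  rw [← add_div]
  gcongr
  exact_mod_cast Set.ncard_union_le {ω | P ω} {ω | Q ω}

theorem unifProb_exists_mem_le (T : Finset ι) {P : ι → Ω → Prop} {c : ℝ}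
    (hc : ∀ i ∈ T, unifProb (P i) ≤ c) :
    unifProb (fun ω => ∃ i ∈ T, P i ω) ≤ T.card * c := by
  have hunion : {ω | ∃ i ∈ T, P i ω} = ⋃ i ∈ T, {ω | P i ω} := by
    ext ω
    simp only [Set.mem_ofPred_eq, Set.mem_iUnion, exists_prop]
  have hsum : unifProb (fun ω => ∃ i ∈ T, P i ω) ≤ ∑ i ∈ T, unifProb (P i) := by
    unfold unifProb
    rw [← Finset.sum_div, hunion]
    gcongr
    exact_mod_cast Finset.set_ncard_biUnion_le T fun i => {ω | P i ω}
  simpa only [nsmul_eq_mul] using hsum.trans (Finset.sum_le_card_nsmul T _ c hc)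

theorem unifProb_exists_lt_le (N : ℕ) {P : ℕ → Ω → Prop} {c : ℝ}
    (hc : ∀ i < N, unifProb (P i) ≤ c) :
    unifProb (fun ω => ∃ i < N, P i ω) ≤ N * c := by
  simpa only [Finset.mem_range, Finset.card_range] using
    unifProb_exists_mem_le (Finset.range N) fun i hi => hc i (Finset.mem_range.1 hi)

theorem unifProb_exists_le [Fintype ι] {P : ι → Ω → Prop} {c : ℝ}
    (hc : ∀ i, unifProb (P i) ≤ c) :
    unifProb (fun ω => ∃ i, P i ω) ≤ Fintype.card ι * c := by
  simpa only [Finset.mem_univ, true_and, Finset.card_univ] using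
    unifProb_exists_mem_le Finset.univ fun i _ => hc i

theorem unifProb_prod_eq_sum (P : α × β → Prop) :
    unifProb P = (∑ a, unifProb fun b => P (a, b)) / Fintype.card α := by
  have hcount : {x | P x}.ncard = ∑ a, {b | P (a, b)}.ncard :=
    (Nat.card_congr (Equiv.subtypeProdEquivSigmaSubtype fun a b => P (a, b))).trans Nat.card_sigma
  unfold unifProb
  rw [hcount, Fintype.card_prod, ← Finset.sum_div, div_div, mul_comm (Fintype.card α)]
  push_cast
  rfl

theorem unifProb_prod_le_left [Nonempty α] {P : α × β → Prop} {c : ℝ}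
    (hc : ∀ a, unifProb (fun b => P (a, b)) ≤ c) : unifProb P ≤ c := by
  rw [unifProb_prod_eq_sum, div_le_iff₀' (Nat.cast_pos.2 Fintype.card_pos), ← nsmul_eq_mul]
  exact Finset.sum_le_card_nsmul _ _ _ fun a _ => hc a

theorem unifProb_prod_le_right [Nonempty β] {P : α × β → Prop} {c : ℝ}
    (hc : ∀ b, unifProb (fun a => P (a, b)) ≤ c) : unifProb P ≤ c :=
  (unifProb_le_of_injOn (Q := P ∘ Prod.swap) (Fintype.card_congr (Equiv.prodComm α β)) Prod.swap
    (fun _ => id) Prod.swap_injective.injOn).trans (unifProb_prod_le_left hc)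

theorem unifProb_fst [Nonempty β] (P : α → Prop) :
    unifProb (fun x : α × β => P x.1) = unifProb P := by
  have hcount : {x : α × β | P x.1}.ncard = {a | P a}.ncard * Fintype.card β := by
    rw [← Nat.card_eq_fintype_card, ← Set.ncard_univ, ← Set.ncard_prod, Set.prod_univ]
    rfl
  unfold unifProb
  rw [hcount, Fintype.card_prod]
  push_cast
  exact mul_div_mul_right _ _ (Nat.cast_ne_zero.2 Fintype.card_ne_zero)

theorem unifProb_true [Nonempty Ω] : unifProb (fun _ : Ω => True) = 1 := by
  simp [unifProb]

theorem unifProb_eq_const (a : α) : unifProb (fun x => x = a) = (Fintype.card α : ℝ)⁻¹ := by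
  simp [unifProb]

variable [Fintype ι] [Fintype κ]

theorem unifProb_forall_eq_prod [DecidableEq ι] (P : ι → α → Prop) :
    unifProb (fun f : ι → α => ∀ i, P i (f i)) = ∏ i, unifProb (P i) := by
  have hcount : {f : ι → α | ∀ i, P i (f i)}.ncard = ∏ i, {a | P i a}.ncard :=
    (Nat.card_congr Equiv.subtypePiEquivPi).trans Nat.card_pi
  unfold unifProb
  rw [hcount, Finset.prod_div_distrib, Fintype.card_pi]
  push_cast
  rfl

theorem unifProb_forall_comp_eq_prod [DecidableEq ι] [Nonempty α] {F : κ → ι}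
    (hF : Function.Injective F) (P : κ → α → Prop) :
    unifProb (fun f : ι → α => ∀ e, P e (f (F e))) = ∏ e, unifProb (P e) := by
  have hfiber : (fun f : ι → α => ∀ e, P e (f (F e))) =
      fun f => ∀ i, ∀ e, F e = i → P e (f i) :=
    funext fun f => propext ⟨fun h i e he => he ▸ h e, fun h e => h (F e) e rfl⟩
  rw [hfiber, unifProb_forall_eq_prod fun i a => ∀ e, F e = i → P e a]
  refine (Fintype.prod_of_injective F hF _ _ (fun i hi => ?_) fun e => ?_).symm
  · have hvacuous : (fun a => ∀ e, F e = i → P e a) = fun _ => True :=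
      funext fun a => eq_true fun e he => absurd ⟨e, he⟩ hi
    rw [hvacuous, unifProb_true]
  · simp only [hF.eq_iff, forall_eq]

/-- Swapping the value of `f` at `z f` with an independent fresh sample `y` preserves the uniform
distribution of `(f, y)` and turns `π (f (z f)) = g f` into `π y = g f`. -/
theorem unifProb_le_of_update_invariant {γ : Type} [DecidableEq ι] [Nonempty α]
    {π : α → γ} {p : ℝ} (hπ : ∀ c, unifProb (fun y => π y = c) ≤ p)
    {B : (ι → α) → Prop} (z : (ι → α) → ι) (g : (ι → α) → γ)
    (hz : ∀ f, B f → ∀ y, z (Function.update f (z f) y) = z f)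
    (hg : ∀ f, B f → ∀ y, g (Function.update f (z f) y) = g f)
    (hB : ∀ f, B f → π (f (z f)) = g f) :
    unifProb B ≤ p := by
  let swap (x : (ι → α) × α) : (ι → α) × α := (Function.update x.1 (z x.1) x.2, x.1 (z x.1))
  have hswap (x) (hx : B x.1) : swap (swap x) = x := by
    simp [swap, hz x.1 hx]
  calc unifProb B = unifProb (fun x : (ι → α) × α => B x.1) := (unifProb_fst B).symm
    _ ≤ unifProb (fun x : (ι → α) × α => π x.2 = g x.1) :=
      unifProb_le_of_injOn rfl swap
        (fun x hx => (hB x.1 hx).trans (hg x.1 hx x.2).symm)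
        (Set.LeftInvOn.injOn (f₁' := swap) hswap)
    _ ≤ p := unifProb_prod_le_left fun f => hπ (g f)

end UniformProbability

section Arithmetic

theorem injective_add_mod {p v : ℕ} (hv : 0 < v) (hp : p ≤ v) (c : ℕ) :
    Function.Injective fun e : Fin p => (⟨(c + e) % v, Nat.mod_lt _ hv⟩ : Fin v) := by
  intro a b hab
  have hmod : (a : ℕ) ≡ b [MOD v] := Nat.ModEq.add_left_cancel' c (congrArg Fin.val hab)
  exact Fin.ext (hmod.eq_of_lt_of_lt (a.2.trans_le hp) (b.2.trans_le hp))

theorem natCast_div_two_pow_le_two_rpow {q u : ℕ} {δ : ℝ} (hq : 1 ≤ q)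
    (hδ : δ ≤ u - Real.logb 2 q) : (q : ℝ) / 2 ^ u ≤ 2 ^ (-δ) := by
  calc (q : ℝ) / 2 ^ u = 2 ^ (Real.logb 2 q - u) := by
        rw [Real.rpow_sub two_pos, Real.rpow_natCast,
          Real.rpow_logb two_pos (by norm_num) (Nat.cast_pos.2 hq)]
    _ ≤ 2 ^ (-δ) := Real.rpow_le_rpow_of_exponent_le one_le_two (by linarith)

theorem two_pow_mul_pow_le_two_rpow {s p : ℕ} {δ r : ℝ} (hr₀ : 0 ≤ r) (hr : r ≤ 2 ^ (-δ))
    (hp : s + δ ≤ p * δ) : 2 ^ s * r ^ p ≤ (2 : ℝ) ^ (-δ) := by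
  calc 2 ^ s * r ^ p ≤ (2 : ℝ) ^ s * (2 ^ (-δ)) ^ p := by gcongr
    _ = 2 ^ (s + -δ * p) := by
        rw [Real.rpow_add two_pos, Real.rpow_mul zero_le_two, Real.rpow_natCast, Real.rpow_natCast]
    _ ≤ 2 ^ (-δ) := Real.rpow_le_rpow_of_exponent_le one_le_two (by linarith)

theorem add_le_ceil_mul {s δ : ℝ} (hδ : 0 < δ) : s + δ ≤ ⌈s / δ + 1⌉₊ * δ := by
  calc s + δ = (s / δ + 1) * δ := by field_simp
    _ ≤ ⌈s / δ + 1⌉₊ * δ := by gcongr; exact Nat.le_ceil _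

end Arithmetic

/-- The `u`-bit substring of `y` starting at bit `a` (`0`-based). In a chain node, `bitSlice u 0` is
the input block and `bitSlice u u` the preceding oracle output `r`; of an oracle answer,
`bitSlice u 0` is the part that becomes the next `r`. Positions beyond the end read as `false`. -/
def bitSlice {n : ℕ} (u a : ℕ) (y : Bits n) : Bits u := fun j => bitAt y (j + a)

theorem unifProb_bitSlice_eq {n u a : ℕ} (h : u + a ≤ n) (c : Bits u) :
    unifProb (fun y : Bits n => bitSlice u a y = c) = (2 : ℝ) ^ (-(u : ℝ)) := by
  have hlt (j : Fin u) : (j : ℕ) + a < n := by omega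
  have hinj : Function.Injective fun j : Fin u => (⟨j + a, hlt j⟩ : Fin n) := fun i j hij =>
    Fin.ext (Nat.add_right_cancel (congrArg Fin.val hij))
  have hslice : (fun y : Bits n => bitSlice u a y = c) =
      fun y => ∀ j : Fin u, y ⟨j + a, hlt j⟩ = c j :=
    funext fun y => propext <| by simp only [funext_iff, bitSlice, bitAt, hlt, dite_true]
  rw [hslice, unifProb_forall_comp_eq_prod hinj fun j b => b = c j]
  simp only [unifProb_eq_const, Finset.prod_const, Finset.card_univ, Fintype.card_fin,
    Fintype.card_bool, Nat.cast_ofNat, inv_pow, Real.rpow_neg_natCast, zpow_neg, zpow_natCast]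

section Chain

variable {n u v : ℕ} (RO : Bits n → Bits n) (X : Fin v → Bits u)

theorem bitSlice_zero_simS (hn : 2 * u ≤ n) (j : ℕ) :
    bitSlice u 0 (simS n u v RO X j) = getX X (j % v) := by
  funext b
  have hb : (b : ℕ) < n := by omega
  simp [bitSlice, simS, simStr, bitAt, hb]

theorem bitSlice_self_simS (hn : 2 * u ≤ n) (j : ℕ) :
    bitSlice u u (simS n u v RO X j) = simR n u v RO X j := by
  funext b
  have hb : (b : ℕ) + u < n := by omega
  have hb' : (b : ℕ) + u < 2 * u := by omega
  simp [bitSlice, simS, simStr, bitAt, hb, hb']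

theorem simR_succ (j : ℕ) :
    simR n u v RO X (j + 1) = bitSlice u 0 (RO (simS n u v RO X j)) := rfl

theorem simR_update {z : Bits n} (y : Bits n) {j : ℕ} (h : ∀ a < j, simS n u v RO X a ≠ z) :
    simR n u v (Function.update RO z y) X j = simR n u v RO X j := by
  induction j with
  | zero => rfl
  | succ j ih =>
    have hR := ih fun a ha => h a (Nat.lt_succ_of_lt ha)
    have hS : simS n u v (Function.update RO z y) X j = simS n u v RO X j :=
      congrArg (simStr n u v X j) hR
    rw [simR_succ, simR_succ, hS, Function.update_of_ne (h j j.lt_succ_self)]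

theorem simS_update {z : Bits n} (y : Bits n) {j : ℕ} (h : ∀ a < j, simS n u v RO X a ≠ z) :
    simS n u v (Function.update RO z y) X j = simS n u v RO X j :=
  congrArg (simStr n u v X j) (simR_update RO X y h)

variable (n u v) in
/-- The chain node with `0`-based index `j` differs from all earlier ones, so that the oracle's
answer on it is independent of the chain up to and including that node. -/
def FreshNode (RO : Bits n → Bits n) (X : Fin v → Bits u) (j : ℕ) : Prop :=
  ∀ a < j, simS n u v RO X a ≠ simS n u v RO X j

theorem unifProb_simR_succ_eq_guess_le (hu : u ≤ n) {j : ℕ} {B : (Bits n → Bits n) → Prop}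
    (guess : (Bits n → Bits n) → Bits u)
    (hfresh : ∀ RO, B RO → FreshNode n u v RO X j)
    (hguess : ∀ RO, B RO → ∀ y,
      guess (Function.update RO (simS n u v RO X j) y) = guess RO)
    (hB : ∀ RO, B RO → simR n u v RO X (j + 1) = guess RO) :
    unifProb B ≤ (2 : ℝ) ^ (-(u : ℝ)) :=
  unifProb_le_of_update_invariant (π := bitSlice u 0) (fun c => (unifProb_bitSlice_eq hu c).le)
    (fun RO => simS n u v RO X j) guess
    (fun RO h y => simS_update RO X y (hfresh RO h)) hguess hB

theorem unifProb_fresh_collision_le (hn : 2 * u ≤ n) (a b : ℕ) :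
    unifProb (fun RO => a ≤ b ∧ FreshNode n u v RO X b ∧
      simS n u v RO X a = simS n u v RO X (b + 1)) ≤ (2 : ℝ) ^ (-(u : ℝ)) := by
  refine unifProb_simR_succ_eq_guess_le X (by omega) (fun RO => simR n u v RO X a)
    (fun RO h => h.2.1) ?_ ?_
  · rintro RO ⟨hab, hfresh, -⟩ y
    exact simR_update RO X y fun c hc => hfresh c (hc.trans_le hab)
  · rintro RO ⟨-, -, heq⟩
    rw [← bitSlice_self_simS RO X hn, ← heq, bitSlice_self_simS RO X hn]

theorem exists_fresh_collision_of_not_fresh {j : ℕ} (h : ¬ FreshNode n u v RO X j) :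
    ∃ b < j, ∃ a < j, a ≤ b ∧ FreshNode n u v RO X b ∧
      simS n u v RO X a = simS n u v RO X (b + 1) := by
  induction j using Nat.strong_induction_on with
  | _ j ih =>
    obtain ⟨a, haj, heq⟩ : ∃ a < j, simS n u v RO X a = simS n u v RO X j := by
      simpa [FreshNode] using h
    obtain ⟨b, rfl⟩ := Nat.exists_eq_succ_of_ne_zero (Nat.ne_zero_of_lt haj)
    by_cases hb : FreshNode n u v RO X b
    · exact ⟨b, b.lt_succ_self, a, haj, Nat.le_of_lt_succ haj, hb, heq⟩
    · obtain ⟨b', hb', a', ha', hcoll⟩ := ih b b.lt_succ_self hb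
      exact ⟨b', by omega, a', by omega, hcoll⟩

theorem unifProb_exists_not_fresh_le (hn : 2 * u ≤ n) (w : ℕ) :
    unifProb (fun RO => ∃ j < w, ¬ FreshNode n u v RO X j) ≤
      (w : ℝ) ^ 2 * (2 : ℝ) ^ (-(u : ℝ)) := by
  calc unifProb (fun RO => ∃ j < w, ¬ FreshNode n u v RO X j)
      ≤ unifProb (fun RO => ∃ b < w, ∃ a < w, a ≤ b ∧ FreshNode n u v RO X b ∧
          simS n u v RO X a = simS n u v RO X (b + 1)) := by
        refine unifProb_mono fun RO ⟨j, hj, hnot⟩ => ?_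
        obtain ⟨b, hb, a, ha, hcoll⟩ := exists_fresh_collision_of_not_fresh RO X hnot
        exact ⟨b, hb.trans hj, a, ha.trans hj, hcoll⟩
    _ ≤ w * (w * (2 : ℝ) ^ (-(u : ℝ))) :=
        unifProb_exists_lt_le w fun b _ => unifProb_exists_lt_le w fun a _ =>
          unifProb_fresh_collision_le X hn a b
    _ = (w : ℝ) ^ 2 * (2 : ℝ) ^ (-(u : ℝ)) := by ring

end Chain

section Queries

theorem advAns_update {n : ℕ} (RO : Bits n → Bits n) (f : List (Bits n) → Bits n)
    {z : Bits n} (y : Bits n) {t : ℕ} (h : ∀ t' < t, advQ n RO f t' ≠ z) :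
    advAns n (Function.update RO z y) f t = advAns n RO f t := by
  induction t with
  | zero => rfl
  | succ t ih =>
    have hprefix := ih fun t' ht' => h t' (Nat.lt_succ_of_lt ht')
    have hlast : f (advAns n RO f t) ≠ z := h t t.lt_succ_self
    simp only [advAns, hprefix, Function.update_of_ne hlast]

variable {n s q m : ℕ} {I : Type} (A : MPC n s q m I) (RO : Bits n → Bits n) (X : I)

/-- The string `x` is among the queries that precede the `t`-th query of machine `i` in round `k`:
those of all machines in earlier rounds and those of the same machine earlier in the round.
Queries of other machines in the same round do not count, as machine `i` cannot see them. -/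
def QueriedBefore (k : ℕ) (i : Fin m) (t : ℕ) (x : Bits n) : Prop :=
  (∃ k' < k, ∃ i', ∃ t' < q, mquery A RO X k' i' t' = x) ∨ ∃ t' < t, mquery A RO X k i t' = x

theorem mstate_update {z : Bits n} (y : Bits n) {k : ℕ}
    (h : ∀ k' < k, ∀ i, ∀ t < q, mquery A RO X k' i t ≠ z) :
    mstate A (Function.update RO z y) X k = mstate A RO X k := by
  induction k with
  | zero => rfl
  | succ k ih =>
    have hstate := ih fun k' hk' => h k' (Nat.lt_succ_of_lt hk')
    have hans (i : Fin m) :=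
      advAns_update RO (A.qf k i (mstate A RO X k i)) y (h k k.lt_succ_self i)
    simp only [mstate, hstate, hans]

theorem mquery_update {z : Bits n} (y : Bits n) {k : ℕ} {i : Fin m} {t : ℕ}
    (h : ¬ QueriedBefore A RO X k i t z) :
    mquery A (Function.update RO z y) X k i t = mquery A RO X k i t := by
  simp only [QueriedBefore, not_or, not_exists, not_and] at h
  unfold mquery advQ
  rw [mstate_update A RO X y h.1, advAns_update RO _ y h.2]

end Queries

section Skipping

variable {n u v s q m : ℕ} (A : MPC n s q m (Fin v → Bits u)) (RO : Bits n → Bits n)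
  (X : Fin v → Bits u)

/-- The `t`-th query of machine `i` in round `k` is the chain node following node `j` (`0`-based),
although node `j` itself does not precede it among the queries. -/
def Skips (k : ℕ) (i : Fin m) (t j : ℕ) : Prop :=
  mquery A RO X k i t = simS n u v RO X (j + 1) ∧
    ¬ QueriedBefore A RO X k i t (simS n u v RO X j)

theorem unifProb_fresh_skips_le (hn : 2 * u ≤ n) (k : ℕ) (i : Fin m) (t j : ℕ) :
    unifProb (fun RO => FreshNode n u v RO X j ∧ Skips A RO X k i t j) ≤
      (2 : ℝ) ^ (-(u : ℝ)) := by
  refine unifProb_simR_succ_eq_guess_le X (by omega)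
    (fun RO => bitSlice u u (mquery A RO X k i t)) (fun RO h => h.1) ?_ ?_
  · rintro RO ⟨-, -, hunqueried⟩ y
    rw [mquery_update A RO X y hunqueried]
  · rintro RO ⟨-, hquery, -⟩
    rw [hquery, bitSlice_self_simS RO X hn]

theorem unifProb_exists_fresh_skips_le (hn : 2 * u ≤ n) (N w : ℕ) :
    unifProb (fun RO => ∃ k < N, ∃ i, ∃ t < q, ∃ j < w,
      FreshNode n u v RO X j ∧ Skips A RO X k i t j) ≤
      N * (w * m * q * (2 : ℝ) ^ (-(u : ℝ))) := by
  calc _ ≤ N * (Fintype.card (Fin m) * (q * (w * (2 : ℝ) ^ (-(u : ℝ))))) :=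
        unifProb_exists_lt_le N fun k _ => unifProb_exists_le fun i =>
          unifProb_exists_lt_le q fun t _ => unifProb_exists_lt_le w fun j _ =>
            unifProb_fresh_skips_le A X hn k i t j
    _ = N * (w * m * q * (2 : ℝ) ^ (-(u : ℝ))) := by rw [Fintype.card_fin]; ring

theorem exists_query_eq_simS_of_not_skips {k : ℕ} {i : Fin m} {b j : ℕ}
    (hskip : ∀ t < q, ∀ a < j, ¬ Skips A RO X k i t a)
    (hearlier : ∀ k' < k, ∀ i, ∀ t < q, ∀ a < j, b ≤ a → mquery A RO X k' i t ≠ simS n u v RO X a)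
    (hbj : b ≤ j) (hquery : ∃ t < q, mquery A RO X k i t = simS n u v RO X j) :
    ∃ t < q, mquery A RO X k i t = simS n u v RO X b := by
  refine Nat.decreasingInduction' (P := fun a => ∃ t < q, mquery A RO X k i t = simS n u v RO X a)
    (fun a haj hba ⟨t, ht, heq⟩ => ?_) hbj hquery
  have hqueried := not_not.1 fun h => hskip t ht a haj ⟨heq, h⟩
  rcases hqueried with ⟨k', hk', i', t', ht', heq'⟩ | ⟨t', ht', heq'⟩
  · exact absurd heq' (hearlier k' hk' i' t' ht' a haj hba)
  · exact ⟨t', ht'.trans ht, heq'⟩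

end Skipping

section ReadingBlocks

variable {n u v s q m : ℕ} (A : MPC n s q m (Fin v → Bits u)) (RO : Bits n → Bits n)
  (X : Fin v → Bits u)

/-- The blocks of the input occurring at the `p` consecutive chain positions `c, …, c + p - 1`
(`0`-based) all appear as first blocks of queries of machine `i` in round `k`. -/
def ReadsBlocks (k : ℕ) (i : Fin m) (c p : ℕ) : Prop :=
  ∀ e < p, ∃ t < q, bitSlice u 0 (mquery A RO X k i t) = getX X ((c + e) % v)

theorem unifProb_blocks_mem_le {p : ℕ} (hv : 0 < v) (hp : p ≤ v) (c : ℕ) (g : ℕ → Bits u) :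
    unifProb (fun X : Fin v → Bits u => ∀ e < p, ∃ t < q, g t = getX X ((c + e) % v)) ≤
      ((q : ℝ) / 2 ^ u) ^ p := by
  let P (x : Bits u) : Prop := ∃ t < q, x = g t
  have hP : unifProb P ≤ (q : ℝ) / 2 ^ u := by
    rw [div_eq_mul_inv]
    refine unifProb_exists_lt_le q fun t _ => (unifProb_eq_const _).trans_le ?_
    simp
  calc _ ≤ unifProb (fun X : Fin v → Bits u =>
          ∀ e : Fin p, P (X ⟨(c + e) % v, Nat.mod_lt _ hv⟩)) := by
        refine unifProb_mono fun X h e => ?_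
        obtain ⟨t, ht, heq⟩ := h e e.2
        exact ⟨t, ht, by rw [heq, getX, dif_pos (Nat.mod_lt _ hv)]⟩
    _ = unifProb P ^ p := by
        rw [unifProb_forall_comp_eq_prod (injective_add_mod hv hp c) fun _ => P, Finset.prod_const,
          Finset.card_univ, Fintype.card_fin]
    _ ≤ ((q : ℝ) / 2 ^ u) ^ p := by
        gcongr
        exact div_nonneg (Nat.cast_nonneg _) (Nat.cast_nonneg _)

theorem unifProb_readsBlocks_le {p : ℕ} (hv : 0 < v) (hp : p ≤ v) (k : ℕ) (i : Fin m) (c : ℕ) :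
    unifProb (fun X => ReadsBlocks A RO X k i c p) ≤ 2 ^ s * ((q : ℝ) / 2 ^ u) ^ p := by
  calc _ ≤ unifProb (fun X : Fin v → Bits u => ∃ σ : Bits s, ∀ e < p, ∃ t < q,
          bitSlice u 0 (advQ n RO (A.qf k i σ) t) = getX X ((c + e) % v)) :=
        unifProb_mono fun X h => ⟨mstate A RO X k i, h⟩
    _ ≤ Fintype.card (Bits s) * ((q : ℝ) / 2 ^ u) ^ p :=
        unifProb_exists_le fun σ => unifProb_blocks_mem_le hv hp c _
    _ = 2 ^ s * ((q : ℝ) / 2 ^ u) ^ p := by simp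

theorem unifProb_exists_readsBlocks_le {p : ℕ} (hv : 0 < v) (hp : p ≤ v) (c : ℕ → ℕ) (N : ℕ) :
    unifProb (fun X => ∃ k < N, ∃ i, ReadsBlocks A RO X k i (c k) p) ≤
      N * (m * (2 ^ s * ((q : ℝ) / 2 ^ u) ^ p)) := by
  simpa only [Fintype.card_fin] using
    unifProb_exists_lt_le N fun k _ => unifProb_exists_le fun i =>
      unifProb_readsBlocks_le A RO hv hp k i (c k)

end ReadingBlocks

section Rounds

/-- The smallest `0`-based index of a node of `C^{(k)}` (when `0 ≤ h`): the node with index `j` is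
the paper's `s_{j+1}`, so it lies beyond the threshold `k * h + 1` exactly when `k * h < j`. -/
noncomputable def roundStart (h : ℝ) (k : ℕ) : ℕ := ⌊k * h⌋₊ + 1

theorem roundStart_le_iff {h : ℝ} (hh : 0 ≤ h) {k j : ℕ} : roundStart h k ≤ j ↔ k * h < j :=
  Nat.succ_le_iff.trans (Nat.floor_lt (by positivity))

theorem roundStart_mono {h : ℝ} (hh : 0 ≤ h) : Monotone (roundStart h) := by
  intro a b hab
  unfold roundStart
  gcongr

theorem roundStart_add_ceil_le {h : ℝ} (hh : 0 ≤ h) (k : ℕ) :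
    roundStart h k + ⌈h⌉₊ ≤ roundStart h (k + 1) + 1 := by
  have hfloor : ⌊k * h⌋₊ + ⌊h⌋₊ ≤ ⌊((k + 1 : ℕ) : ℝ) * h⌋₊ := by
    refine Nat.le_floor ?_
    push_cast
    linarith [Nat.floor_le hh, Nat.floor_le (mul_nonneg k.cast_nonneg hh)]
  have hceil := Nat.ceil_le_floor_add_one h
  unfold roundStart
  omega

variable {n u v s q m : ℕ} {A : MPC n s q m (Fin v → Bits u)} {RO : Bits n → Bits n}
  {X : Fin v → Bits u}

theorem readsBlocks_of_query_eq_simS (hn : 2 * u ≤ n) {k : ℕ} {i : Fin m} {c p j : ℕ}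
    (hskip : ∀ t < q, ∀ a < j, ¬ Skips A RO X k i t a)
    (hearlier : ∀ k' < k, ∀ i, ∀ t < q, ∀ a < j, c ≤ a → mquery A RO X k' i t ≠ simS n u v RO X a)
    (hj : c + p ≤ j + 1) (hquery : ∃ t < q, mquery A RO X k i t = simS n u v RO X j) :
    ReadsBlocks A RO X k i c p := by
  intro e he
  obtain ⟨t, ht, heq⟩ := exists_query_eq_simS_of_not_skips A RO X hskip (b := c + e)
    (fun k' hk' i' t ht a ha hle => hearlier k' hk' i' t ht a ha ((Nat.le_add_right c e).trans hle))
    (by omega) hquery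
  exact ⟨t, ht, by rw [heq, bitSlice_zero_simS RO X hn]⟩

theorem index_lt_of_query_eq_simS (hn : 2 * u ≤ n) {N w p : ℕ} {c : ℕ → ℕ} (hmono : Monotone c)
    (hstep : ∀ k, c k + p ≤ c (k + 1) + 1)
    (hskip : ∀ k < N, ∀ i, ∀ t < q, ∀ j < w, ¬ Skips A RO X k i t j)
    (hreads : ∀ k < N, ∀ i, ¬ ReadsBlocks A RO X k i (c k) p) {k : ℕ} (hk : k < N) {i : Fin m}
    {t : ℕ} (ht : t < q) {j : ℕ} (hj : j < w)
    (hquery : mquery A RO X k i t = simS n u v RO X j) : j < c (k + 1) := by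
  induction k using Nat.strong_induction_on generalizing i t j with
  | _ k ih =>
    by_contra! hle
    refine hreads k hk i (readsBlocks_of_query_eq_simS hn
      (fun t ht a ha => hskip k hk i t ht a (ha.trans hj)) ?_
      ((hstep k).trans (Nat.succ_le_succ hle)) ⟨t, ht, hquery⟩)
    intro k' hk' i' t' ht' a ha hca heq
    exact (ih k' hk' (hk'.trans hk) ht' (ha.trans hj) heq).not_ge ((hmono hk').trans hca)

theorem reads_or_skips_or_not_fresh_of_query_eq_simS (hn : 2 * u ≤ n) {h : ℝ} (hh : 0 ≤ h)
    {N w k : ℕ} (hk : k < N) {i : Fin m} {t : ℕ} (ht : t < q) {j : ℕ} (hj : j < w)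
    (hlate : N * h < j) (hquery : mquery A RO X k i t = simS n u v RO X j) :
    (∃ k < N, ∃ i, ReadsBlocks A RO X k i (roundStart h k) ⌈h⌉₊) ∨
      (∃ k < N, ∃ i, ∃ t < q, ∃ j < w, FreshNode n u v RO X j ∧ Skips A RO X k i t j) ∨
      ∃ j < w, ¬ FreshNode n u v RO X j := by
  by_contra! hnot
  obtain ⟨hreads, hskip, hfresh⟩ := hnot
  have hlt : j < roundStart h (k + 1) :=
    index_lt_of_query_eq_simS hn (roundStart_mono hh) (roundStart_add_ceil_le hh)
      (fun k hk i t ht j hj => hskip k hk i t ht j hj (hfresh j hj)) hreads hk ht hj hquery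
  exact hlt.not_ge ((roundStart_mono hh hk).trans ((roundStart_le_iff hh).2 hlate))

variable (A) in
theorem unifProb_exists_late_query_le (hn : 2 * u ≤ n) {h : ℝ} (hh : 0 ≤ h) (hv : 0 < v)
    (hhv : h ≤ v) (N w : ℕ) :
    unifProb (fun ω : (Bits n → Bits n) × (Fin v → Bits u) =>
      ∃ k < N, ∃ i, ∃ t < q, ∃ j < w, N * h < j ∧
        mquery A ω.1 ω.2 k i t = simS n u v ω.1 ω.2 j) ≤
      N * (m * (2 ^ s * ((q : ℝ) / 2 ^ u) ^ ⌈h⌉₊)) +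
        (N * (w * m * q * (2 : ℝ) ^ (-(u : ℝ))) + (w : ℝ) ^ 2 * (2 : ℝ) ^ (-(u : ℝ))) := by
  refine (unifProb_mono fun ω ⟨k, hk, i, t, ht, j, hj, hlate, hquery⟩ =>
    reads_or_skips_or_not_fresh_of_query_eq_simS hn hh hk ht hj hlate hquery).trans ?_
  refine (unifProb_or_le _ _).trans (add_le_add ?_ ((unifProb_or_le _ _).trans (add_le_add ?_ ?_)))
  · exact unifProb_prod_le_left fun RO =>
      unifProb_exists_readsBlocks_le A RO hv (Nat.ceil_le.2 hhv) (roundStart h) N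
  · exact unifProb_prod_le_right fun X => unifProb_exists_fresh_skips_le A X hn N w
  · exact unifProb_prod_le_right fun X => unifProb_exists_not_fresh_le X hn w

end Rounds

theorem stmt12_general {n u v s q m : ℕ} (hn : 2 * u ≤ n) (hq : 1 ≤ q) {δ h : ℝ} (hδ : 0 < δ)
    (hδu : δ ≤ u - Real.logb 2 q) (hh : h = s / δ + 1) (hhv : h ≤ v)
    (A : MPC n s q m (Fin v → Bits u)) (w k : ℕ) :
    unifProb (fun ω : (Bits n → Bits n) × (Fin v → Bits u) =>
      ∃ k' ≤ k, ∃ i : Fin m, ∃ t < q, ∃ idx : ℕ, idx ≤ w ∧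
        ((k : ℝ) + 1) * h + 1 < (idx : ℝ) ∧
        mquery A ω.1 ω.2 k' i t = simS n u v ω.1 ω.2 (idx - 1)) ≤
    ((k : ℝ) + 1) * (m * (2 : ℝ) ^ (-δ) + w * m * q * (2 : ℝ) ^ (-(u : ℝ)) +
      (w : ℝ) ^ 2 * (2 : ℝ) ^ (-(u : ℝ))) := by
  have hh1 : 1 ≤ h := hh ▸ le_add_of_nonneg_left (by positivity)
  have hh0 : 0 ≤ h := zero_le_one.trans hh1
  have hv : 0 < v := Nat.cast_pos.1 (zero_lt_one.trans_le (hh1.trans hhv))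
  have hreads : 2 ^ s * ((q : ℝ) / 2 ^ u) ^ ⌈h⌉₊ ≤ 2 ^ (-δ) :=
    two_pow_mul_pow_le_two_rpow (by positivity) (natCast_div_two_pow_le_two_rpow hq hδu)
      (hh ▸ add_le_ceil_mul hδ)
  calc _ ≤ unifProb (fun ω : (Bits n → Bits n) × (Fin v → Bits u) =>
          ∃ k' < k + 1, ∃ i, ∃ t < q, ∃ j < w, (k + 1 : ℕ) * h < j ∧
            mquery A ω.1 ω.2 k' i t = simS n u v ω.1 ω.2 j) := by
        refine unifProb_mono fun ω ⟨k', hk', i, t, ht, idx, hidx, hlate, hquery⟩ => ?_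
        have hidx0 : 0 < idx :=
          Nat.cast_pos.1 (lt_of_le_of_lt (by positivity) hlate : (0 : ℝ) < idx)
        refine ⟨k', Nat.lt_succ_of_le hk', i, t, ht, idx - 1, by omega, ?_, hquery⟩
        rw [Nat.cast_pred hidx0]
        push_cast
        linarith
    _ ≤ (k + 1 : ℕ) * (m * (2 ^ s * ((q : ℝ) / 2 ^ u) ^ ⌈h⌉₊)) +
          ((k + 1 : ℕ) * (w * m * q * (2 : ℝ) ^ (-(u : ℝ))) +
            (w : ℝ) ^ 2 * (2 : ℝ) ^ (-(u : ℝ))) :=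
        unifProb_exists_late_query_le A hn hh0 hv hhv (k + 1) w
    _ ≤ (k + 1 : ℕ) * (m * (2 : ℝ) ^ (-δ)) +
          ((k + 1 : ℕ) * (w * m * q * (2 : ℝ) ^ (-(u : ℝ))) +
            (k + 1 : ℕ) * ((w : ℝ) ^ 2 * (2 : ℝ) ^ (-(u : ℝ)))) := by
        refine add_le_add (by gcongr) (add_le_add le_rfl ?_)
        exact le_mul_of_one_le_left (by positivity) (Nat.one_le_cast.2 k.succ_pos)
    _ = _ := by push_cast; ring

/-- **Inductive claim in the proof of Lemma A.1.**
There is an absolute constant `K` such that, in the SimLine setting with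
`u > log₂ q + log₂ v`, `h := s/(u − log₂ q − log₂ v) + 1 ≤ v`, for every deterministic
MPC algorithm and every round `k` with `0 ≤ k < w/h − 1`, the probability over uniformly
random `(RO, X)` that some query made through round `k` hits
`C^{(k+1)} = {s_i : (k+1)h + 1 < i ≤ w}` is at most
`K·(k+1)·(m·2^(−(u − log₂q − log₂v)) + w·m·q·2^(−u) + w²·2^(−u))`. -/
theorem stmt12 : ∃ K : ℝ, 0 < K ∧
    ∀ (n u v w s q m : ℕ), 1 ≤ u → 2 * u ≤ n → 2 ≤ v → 2 ≤ w → 1 ≤ s → 1 ≤ q → 1 ≤ m →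
    Real.logb 2 q + Real.logb 2 v < (u : ℝ) →
    ∀ h : ℝ, h = (s : ℝ) / ((u : ℝ) - Real.logb 2 q - Real.logb 2 v) + 1 → h ≤ (v : ℝ) →
    ∀ (A : MPC n s q m (Fin v → Bits u)) (k : ℕ), (k : ℝ) < (w : ℝ) / h - 1 →
    unifProb (fun ω : (Bits n → Bits n) × (Fin v → Bits u) =>
      ∃ k' ≤ k, ∃ i : Fin m, ∃ t < q, ∃ idx : ℕ, idx ≤ w ∧
        ((k : ℝ) + 1) * h + 1 < (idx : ℝ) ∧
        mquery A ω.1 ω.2 k' i t = simS n u v ω.1 ω.2 (idx - 1)) ≤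
    K * ((k : ℝ) + 1) *
      ((m : ℝ) * (2 : ℝ) ^ (-((u : ℝ) - Real.logb 2 q - Real.logb 2 v)) +
        (w : ℝ) * m * q * (2 : ℝ) ^ (-(u : ℝ)) +
        (w : ℝ) ^ 2 * (2 : ℝ) ^ (-(u : ℝ))) := by
  refine ⟨1, one_pos, fun n u v w s q m _ hn hv _ _ hq _ hlog h hh hhv A k _ => ?_⟩
  simpa only [one_mul] using stmt12_general hn hq (by linarith)
    (sub_le_self _ (Real.logb_nonneg one_lt_two (by norm_cast; omega))) hh hhv A w k
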